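/- Let $n \geq 3$ and $0 < r < R/2$. Suppose $v \in C^2$ satisfies $-\Delta v = f \geq 0$ on the annulus $B_R(0) \setminus \bar B_r(0)$ and $v \geq 0$ on the boundary $\partial(B_R \setminus B_r)$. Then for any $\frac{2r}{R} < \rho_0 < \rho_1 < \rho_2 < 1$, there exists $C > 1$ depending only on $n, \rho_0, \rho_1, \rho_2$ such that $\inf_{\rho_1 R \leq |x| \leq \rho_2 R} v(x) \geq \frac{1}{C R^{n-2}} \int_{2r \leq |y| \leq \rho_0 R} f(y)\,dy$. -/

import Mathlib

open Metric Set MeasureTheory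

/-- The (flat) Laplacian, as the sum of the second partial derivatives. -/
noncomputable def lap {n : ℕ} (u : EuclideanSpace ℝ (Fin n) → ℝ)
    (x : EuclideanSpace ℝ (Fin n)) : ℝ :=
  ∑ i, fderiv ℝ (fun y => fderiv ℝ u y (EuclideanSpace.single i 1)) x
    (EuclideanSpace.single i 1)

/-!
The weak minimum principle gives `v ≥ 0`. Testing `-Δ v` against a compactly supported radial
profile of the fundamental solution `|y| ^ (2 - n)` that is subharmonic inside the radius `ρ₀ R`
discards, in Green's identity, every contribution from near the inner boundary, and hence bounds
`∫ f` by the integral of `v` over an outer ring, with a constant independent of `r`. A chain of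
mean value inequalities (the weak Harnack inequality for nonnegative superharmonic functions) bounds
that integral by `v x`. Rescaling to `R = 1` gives the power of `R`.
-/

section
open Filter Topology Laplacian InnerProductSpace Gradient Module
open scoped ENNReal Pointwise

lemma deriv_deriv_nonneg_of_isLocalMin {q : ℝ → ℝ} {t : ℝ} (hc : ContinuousAt q t)
    (hmin : IsLocalMin q t) : 0 ≤ deriv (deriv q) t := by
  by_contra! hneg
  have hmax : IsLocalMax q t := isLocalMax_of_deriv_deriv_neg hneg hmin.deriv_eq_zero hc
  have hconst : q =ᶠ[𝓝 t] fun _ => q t := by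
    filter_upwards [hmin, hmax] with s h₁ h₂ using le_antisymm h₂ h₁
  have hderiv : deriv q =ᶠ[𝓝 t] fun _ => 0 := by simpa using hconst.deriv
  simp [hderiv.deriv_eq] at hneg

section AffineReparametrization

variable {E : Type*} [NormedAddCommGroup E] [NormedSpace ℝ E]

lemma fderiv_comp_add_smul {F : Type*} [NormedAddCommGroup F] [NormedSpace ℝ F] (u : E → F)
    (w : E) (c : ℝ) (x : E) :
    fderiv ℝ (fun y => u (w + c • y)) x = c • fderiv ℝ u (w + c • x) := by
  rw [fderiv_comp_smul (f := fun z => u (w + z)), fderiv_comp_add_left]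

lemma hasDerivAt_comp_add_smul {u : E → ℝ} {x e : E} {t : ℝ}
    (hu : DifferentiableAt ℝ u (x + t • e)) :
    HasDerivAt (fun s : ℝ => u (x + s • e)) (fderiv ℝ u (x + t • e) e) t := by
  have hline : HasDerivAt (fun s : ℝ => x + s • e) e t := by
    simpa using ((hasDerivAt_id t).smul_const e).const_add x
  exact hu.hasFDerivAt.comp_hasDerivAt t hline

lemma deriv_deriv_comp_add_smul {u : E → ℝ} {x : E} (hu : ContDiffAt ℝ 2 u x) (e : E) :
    deriv (deriv fun t : ℝ => u (x + t • e)) 0 = fderiv ℝ (fun y => fderiv ℝ u y e) x e := by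
  have hline : Tendsto (fun t : ℝ => x + t • e) (𝓝 0) (𝓝 x) :=
    Continuous.tendsto' (by fun_prop) _ _ (by simp)
  have hderiv : (deriv fun t : ℝ => u (x + t • e)) =ᶠ[𝓝 0] fun t => fderiv ℝ u (x + t • e) e := by
    filter_upwards [hline.eventually (hu.eventually (by simp))] with t ht
    exact (hasDerivAt_comp_add_smul (ht.differentiableAt two_ne_zero)).deriv
  have hdu : DifferentiableAt ℝ (fun y => fderiv ℝ u y e) (x + (0 : ℝ) • e) := by
    rw [zero_smul, add_zero]
    exact ((hu.fderiv_right (m := 1) (by norm_num)).differentiableAt one_ne_zero).clm_apply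
      (differentiableAt_const e)
  rw [hderiv.deriv_eq, (hasDerivAt_comp_add_smul hdu).deriv, zero_smul, add_zero]

end AffineReparametrization

section Laplacian

variable {E : Type*} [NormedAddCommGroup E] [InnerProductSpace ℝ E]

lemma gradient_comp_real [CompleteSpace E] {g : ℝ → ℝ} {u : E → ℝ} {x : E}
    (hg : DifferentiableAt ℝ g (u x)) (hu : DifferentiableAt ℝ u x) :
    ∇ (g ∘ u) x = deriv g (u x) • ∇ u x := by
  refine HasGradientAt.gradient (hasGradientAt_iff_hasFDerivAt.2 ?_)
  rw [map_smul]
  exact hg.hasDerivAt.comp_hasFDerivAt x hu.hasGradientAt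

lemma gradient_norm_sq [CompleteSpace E] (x : E) : ∇ (fun y : E => ‖y‖ ^ 2) x = (2 : ℝ) • x := by
  refine ext_inner_right ℝ fun y => ?_
  rw [inner_gradient_left, fderiv_norm_sq_apply, real_inner_smul_left]
  simp

variable [FiniteDimensional ℝ E] {ι : Type*} [Fintype ι] {u : E → ℝ} {U : Set E} {x : E}

lemma laplacian_eq_sum_fderiv_fderiv (b : OrthonormalBasis ι ℝ E) (hu : ContDiffAt ℝ 2 u x) :
    Δ u x = ∑ i, fderiv ℝ (fun y => fderiv ℝ u y (b i)) x (b i) := by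
  have hdu : DifferentiableAt ℝ (fderiv ℝ u) x :=
    (hu.fderiv_right (m := 1) (by norm_num)).differentiableAt one_ne_zero
  rw [laplacian_eq_iteratedFDeriv_orthonormalBasis u b]
  refine Finset.sum_congr rfl fun i _ => ?_
  rw [iteratedFDeriv_two_apply, fderiv_clm_apply hdu (differentiableAt_const _)]
  simp

lemma lap_eq_laplacian {n : ℕ} {u : EuclideanSpace ℝ (Fin n) → ℝ} {x : EuclideanSpace ℝ (Fin n)}
    (hu : ContDiffAt ℝ 2 u x) : lap u x = Δ u x := by
  rw [laplacian_eq_sum_fderiv_fderiv (EuclideanSpace.basisFun (Fin n) ℝ) hu]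
  simp only [lap, EuclideanSpace.basisFun_apply]

lemma sum_fderiv_mul_fderiv (b : OrthonormalBasis ι ℝ E) (u p : E → ℝ) (x : E) :
    ∑ i, fderiv ℝ u x (b i) * fderiv ℝ p x (b i) = ⟪∇ u x, ∇ p x⟫_ℝ := by
  rw [← b.sum_inner_mul_inner]
  refine Finset.sum_congr rfl fun i _ => ?_
  rw [real_inner_comm (∇ p x)]
  simp only [gradient, toDual_symm_apply]

lemma continuousOn_laplacian (hU : IsOpen U) (hu : ContDiffOn ℝ 2 u U) :
    ContinuousOn (Δ u) U := by
  have hD : ContinuousOn (iteratedFDeriv ℝ 2 u) U :=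
    (hu.continuousOn_iteratedFDerivWithin le_rfl hU.uniqueDiffOn).congr
      fun x hx => (iteratedFDerivWithin_of_isOpen 2 hU hx).symm
  rw [laplacian_eq_iteratedFDeriv_stdOrthonormalBasis]
  exact continuousOn_finsetSum _ fun i _ =>
    (ContinuousMultilinearMap.apply ℝ (fun _ : Fin 2 => E) ℝ _).continuous.comp_continuousOn hD

lemma laplacian_eq_zero_of_notMem_tsupport (hx : x ∉ tsupport u) : Δ u x = 0 := by
  have h : u =ᶠ[𝓝 x] fun _ => 0 := notMem_tsupport_iff_eventuallyEq.1 hx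
  rw [(laplacian_congr_nhds h).eq_of_nhds]
  simp

lemma laplacian_comp_add_smul (u : E → ℝ) (w : E) (c : ℝ) (x : E) :
    Δ (fun y => u (w + c • y)) x = c ^ 2 * Δ u (w + c • x) := by
  have hfderiv : fderiv ℝ (fderiv ℝ fun y => u (w + c • y)) x
      = c • c • fderiv ℝ (fderiv ℝ u) (w + c • x) := by
    rw [funext (fderiv_comp_add_smul u w c), ← fderiv_comp_add_smul (fderiv ℝ u)]
    exact congrFun (fderiv_const_smul_field (f := fun y => fderiv ℝ u (w + c • y)) c) x
  simp only [laplacian_eq_iteratedFDeriv_stdOrthonormalBasis, iteratedFDeriv_two_apply, hfderiv,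
    _root_.smul_apply, smul_eq_mul, Finset.mul_sum, pow_two, mul_assoc]

lemma laplacian_comp_real {g : ℝ → ℝ} (hg : ContDiffAt ℝ 2 g (u x)) (hu : ContDiffAt ℝ 2 u x) :
    Δ (g ∘ u) x = deriv (deriv g) (u x) * ‖∇ u x‖ ^ 2 + deriv g (u x) * Δ u x := by
  set b := stdOrthonormalBasis ℝ E
  have hfderiv (i) : (fun y => fderiv ℝ (g ∘ u) y (b i)) =ᶠ[𝓝 x]
      fun y => deriv g (u y) * fderiv ℝ u y (b i) := by
    filter_upwards [hu.eventually (by simp),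
      hu.continuousAt.eventually (hg.eventually (by simp))] with y hy hgy
    rw [((hgy.differentiableAt two_ne_zero).hasDerivAt.comp_hasFDerivAt y
      (hy.differentiableAt two_ne_zero).hasFDerivAt).fderiv]
    rfl
  have hg' : DifferentiableAt ℝ (deriv g) (u x) :=
    (hg.derivWithin (m := 1) (by norm_num)).differentiableAt one_ne_zero
  have hu' (i) : DifferentiableAt ℝ (fun y => fderiv ℝ u y (b i)) x :=
    ((hu.fderiv_right (m := 1) (by norm_num)).differentiableAt one_ne_zero).clm_apply
      (differentiableAt_const _)
  have hcomp : HasFDerivAt (fun y => deriv g (u y)) _ x :=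
    hg'.hasDerivAt.comp_hasFDerivAt x (hu.differentiableAt two_ne_zero).hasFDerivAt
  rw [laplacian_eq_sum_fderiv_fderiv b (hg.comp x hu), laplacian_eq_sum_fderiv_fderiv b hu,
    ← real_inner_self_eq_norm_sq, ← sum_fderiv_mul_fderiv b, Finset.mul_sum, Finset.mul_sum,
    ← Finset.sum_add_distrib]
  refine Finset.sum_congr rfl fun i _ => ?_
  rw [(hfderiv i).fderiv_eq, (hcomp.fun_mul (hu' i).hasFDerivAt).fderiv]
  simp only [_root_.add_apply, _root_.smul_apply, smul_eq_mul]
  ring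

lemma laplacian_norm_sq (x : E) : Δ (fun y : E => ‖y‖ ^ 2) x = 2 * finrank ℝ E := by
  have hfderiv (e : E) :
      (fun y => fderiv ℝ (fun z : E => ‖z‖ ^ 2) y e) = fun y => 2 * ⟪e, y⟫_ℝ := by
    ext y
    rw [← inner_gradient_left, gradient_norm_sq, real_inner_smul_left, real_inner_comm]
  set b := stdOrthonormalBasis ℝ E
  have hterm (i) : fderiv ℝ (fun y => 2 * ⟪b i, y⟫_ℝ) x (b i) = 2 := by
    have h : HasFDerivAt (fun y => 2 * ⟪b i, y⟫_ℝ) ((2 : ℝ) • innerSL ℝ (b i)) x :=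
      (innerSL ℝ (b i)).hasFDerivAt.const_mul 2
    simp [h.fderiv]
  rw [laplacian_eq_sum_fderiv_fderiv b (contDiff_norm_sq ℝ).contDiffAt]
  simp only [hfderiv, hterm, Finset.sum_const, Finset.card_univ, Fintype.card_fin, nsmul_eq_mul,
    mul_comm]

lemma laplacian_nonneg_of_isLocalMin (hu : ContDiffAt ℝ 2 u x) (hmin : IsLocalMin u x) :
    0 ≤ Δ u x := by
  rw [laplacian_eq_sum_fderiv_fderiv (stdOrthonormalBasis ℝ E) hu]
  refine Finset.sum_nonneg fun i _ => ?_
  set e := stdOrthonormalBasis ℝ E i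
  have hline : Tendsto (fun t : ℝ => x + t • e) (𝓝 0) (𝓝 x) :=
    Continuous.tendsto' (by fun_prop) _ _ (by simp)
  rw [← deriv_deriv_comp_add_smul hu]
  refine deriv_deriv_nonneg_of_isLocalMin ?_ ?_
  · simpa [ContinuousAt, Function.comp_def] using hu.continuousAt.tendsto.comp hline
  · simpa [IsLocalMin, IsMinFilter] using hline.eventually hmin

lemma exists_mem_frontier_le_of_laplacian_neg {w : E → ℝ} (hU : IsOpen U)
    (hbdd : Bornology.IsBounded U) (hw : ContDiffOn ℝ 2 w U) (hwc : ContinuousOn w (closure U))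
    (hneg : ∀ y ∈ U, Δ w y < 0) (hx : x ∈ U) : ∃ z ∈ frontier U, w z ≤ w x := by
  obtain ⟨z, hz, hmin⟩ := hbdd.isCompact_closure.exists_isMinOn ⟨x, subset_closure hx⟩ hwc
  refine ⟨z, ⟨hz, fun hzU => ?_⟩, hmin (subset_closure hx)⟩
  rw [hU.interior_eq] at hzU
  have hUz : U ∈ 𝓝 z := hU.mem_nhds hzU
  exact (hneg z hzU).not_ge <| laplacian_nonneg_of_isLocalMin (hw.contDiffAt hUz) <|
    (hmin.on_subset subset_closure).isLocalMin hUz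

lemma nonneg_of_laplacian_nonpos [Nontrivial E] {v : E → ℝ} (hU : IsOpen U)
    (hbdd : Bornology.IsBounded U) (hv : ContDiffOn ℝ 2 v U) (hvc : ContinuousOn v (closure U))
    (hsuper : ∀ y ∈ U, Δ v y ≤ 0) (hfr : ∀ y ∈ frontier U, 0 ≤ v y) (hx : x ∈ U) : 0 ≤ v x := by
  obtain ⟨M, hM⟩ := hbdd.closure.exists_norm_le
  suffices ∀ ε > 0, -(ε * M ^ 2) ≤ v x by
    have hlim : Tendsto (fun ε : ℝ => -(ε * M ^ 2)) (𝓝[>] 0) (𝓝 0) :=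
      (Continuous.tendsto' (by fun_prop) _ _ (by simp)).mono_left nhdsWithin_le_nhds
    exact le_of_tendsto hlim (eventually_mem_nhdsWithin.mono this)
  intro ε hε
  -- Subtracting `ε ‖y‖ ^ 2` makes `v` strictly superharmonic.
  have hsq : ContDiff ℝ 2 (fun y : E => ‖y‖ ^ 2) := contDiff_norm_sq ℝ
  have hεsq : ContDiff ℝ 2 (ε • fun y : E => ‖y‖ ^ 2) := hsq.const_smul ε
  have hdim : 0 < (finrank ℝ E : ℝ) := by exact_mod_cast finrank_pos
  have hneg (y) (hy : y ∈ U) : Δ (v - ε • fun y : E => ‖y‖ ^ 2) y < 0 := by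
    rw [(hv.contDiffAt (hU.mem_nhds hy)).laplacian_sub hεsq.contDiffAt,
      laplacian_smul ε hsq.contDiffAt, laplacian_norm_sq, smul_eq_mul]
    nlinarith [hsuper y hy, mul_pos hε hdim]
  obtain ⟨z, hz, hzx⟩ := exists_mem_frontier_le_of_laplacian_neg hU hbdd
    (hv.sub hεsq.contDiffOn) (hvc.sub hεsq.continuous.continuousOn) hneg hx
  have hzM : ‖z‖ ^ 2 ≤ M ^ 2 := by gcongr; exact hM z (frontier_subset_closure hz)
  simp only [Pi.smul_apply, smul_eq_mul] at hzx
  nlinarith [hfr z hz, mul_le_mul_of_nonneg_left hzM hε.le, mul_nonneg hε.le (sq_nonneg ‖x‖)]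

/-- Nonnegative superharmonic functions of class `C²` on an open set `U`, whose values outside `U`
are irrelevant. -/
structure NonnegSuperharmonicOn (v : E → ℝ) (U : Set E) : Prop where
  contDiffOn : ContDiffOn ℝ 2 v U
  laplacian_nonpos : ∀ x ∈ U, Δ v x ≤ 0
  nonneg : ∀ x ∈ U, 0 ≤ v x

namespace NonnegSuperharmonicOn

variable {v : E → ℝ} {V : Set E}

lemma mono (hv : NonnegSuperharmonicOn v U) (hVU : V ⊆ U) : NonnegSuperharmonicOn v V where
  contDiffOn := hv.contDiffOn.mono hVU
  laplacian_nonpos x hx := hv.laplacian_nonpos x (hVU hx)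
  nonneg x hx := hv.nonneg x (hVU hx)

lemma comp_add_smul (hv : NonnegSuperharmonicOn v U) (w : E) (c : ℝ) :
    NonnegSuperharmonicOn (fun y => v (w + c • y)) ((fun y => w + c • y) ⁻¹' U) where
  contDiffOn := hv.contDiffOn.comp (by fun_prop) fun _ hx => hx
  laplacian_nonpos x hx := by
    rw [laplacian_comp_add_smul]
    exact mul_nonpos_of_nonneg_of_nonpos (sq_nonneg c) (hv.laplacian_nonpos _ hx)
  nonneg x hx := hv.nonneg _ hx

end NonnegSuperharmonicOn

end Laplacian

section Green

lemma integrable_mul_of_tsupport_subset {X : Type*} [TopologicalSpace X] [MeasurableSpace X]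
    [OpensMeasurableSpace X] {μ : Measure X} [IsFiniteMeasureOnCompacts μ] {U : Set X}
    {a p : X → ℝ} (hU : IsOpen U) (ha : ContinuousOn a U) (hp : Continuous p)
    (hc : HasCompactSupport p) (hpU : tsupport p ⊆ U) : Integrable (fun x => a x * p x) μ := by
  refine Continuous.integrable_of_hasCompactSupport (continuous_of_tsupport fun x hx => ?_)
    hc.mul_left
  have hxU : x ∈ U := hpU (tsupport_mul_subset_right (f := a) hx)
  exact (ha.continuousAt (hU.mem_nhds hxU)).mul hp.continuousAt

variable {E : Type*} [NormedAddCommGroup E] [InnerProductSpace ℝ E] [FiniteDimensional ℝ E]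
  [MeasurableSpace E] [BorelSpace E] {U : Set E} {u p : E → ℝ}

lemma integral_mul_fderiv_eq_neg (hU : IsOpen U) (hu : ContDiffOn ℝ 1 u U) (hp : ContDiff ℝ 1 p)
    (hc : HasCompactSupport p) (hpU : tsupport p ⊆ U) (e : E) :
    ∫ y, u y * fderiv ℝ p y e = -∫ y, fderiv ℝ u y e * p y := by
  refine integral_mul_fderiv_eq_neg_fderiv_mul_of_integrable ?_ ?_ ?_ (fun x hx => ?_)
    fun x _ => hp.differentiable one_ne_zero x
  · exact integrable_mul_of_tsupport_subset hU
      ((hu.continuousOn_fderiv_of_isOpen hU le_rfl).clm_apply continuousOn_const)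
      hp.continuous hc hpU
  · exact integrable_mul_of_tsupport_subset hU hu.continuousOn
      ((hp.continuous_fderiv one_ne_zero).clm_apply continuous_const) (hc.fderiv_apply (𝕜 := ℝ) e)
      ((tsupport_fderiv_apply_subset ℝ e).trans hpU)
  · exact integrable_mul_of_tsupport_subset hU hu.continuousOn hp.continuous hc hpU
  · exact (hu.differentiableOn one_ne_zero).differentiableAt (hU.mem_nhds (hpU hx))

lemma integral_inner_gradient_eq_neg_laplacian_mul (hU : IsOpen U) (hu : ContDiffOn ℝ 2 u U)
    (hp : ContDiff ℝ 1 p) (hc : HasCompactSupport p) (hpU : tsupport p ⊆ U) :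
    ∫ y, ⟪∇ u y, ∇ p y⟫_ℝ = -∫ y, Δ u y * p y := by
  set b := stdOrthonormalBasis ℝ E
  have hdu (i) : ContDiffOn ℝ 1 (fun y => fderiv ℝ u y (b i)) U :=
    (hu.fderiv_of_isOpen hU (m := 1) (by norm_num)).clm_apply contDiffOn_const
  have hlap (y) : Δ u y * p y = ∑ i, fderiv ℝ (fun z => fderiv ℝ u z (b i)) y (b i) * p y := by
    by_cases hy : y ∈ U
    · rw [laplacian_eq_sum_fderiv_fderiv b (hu.contDiffAt (hU.mem_nhds hy)), Finset.sum_mul]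
    · simp [image_eq_zero_of_notMem_tsupport fun h => hy (hpU h)]
  simp only [hlap, ← sum_fderiv_mul_fderiv b]
  rw [integral_finsetSum, integral_finsetSum, ← Finset.sum_neg_distrib]
  · exact Finset.sum_congr rfl fun i _ => integral_mul_fderiv_eq_neg hU (hdu i) hp hc hpU (b i)
  · exact fun i _ => integrable_mul_of_tsupport_subset hU
      (((hdu i).continuousOn_fderiv_of_isOpen hU le_rfl).clm_apply continuousOn_const)
      hp.continuous hc hpU
  · exact fun i _ => integrable_mul_of_tsupport_subset hU (hdu i).continuousOn
      ((hp.continuous_fderiv one_ne_zero).clm_apply continuous_const) (hc.fderiv_apply (𝕜 := ℝ) _)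
      ((tsupport_fderiv_apply_subset ℝ _).trans hpU)

lemma integral_inner_gradient_eq_neg_mul_laplacian (hU : IsOpen U) (hu : ContDiffOn ℝ 1 u U)
    (hp : ContDiff ℝ 2 p) (hc : HasCompactSupport p) (hpU : tsupport p ⊆ U) :
    ∫ y, ⟪∇ u y, ∇ p y⟫_ℝ = -∫ y, u y * Δ p y := by
  set b := stdOrthonormalBasis ℝ E
  have hdp (i) : ContDiff ℝ 1 (fun y => fderiv ℝ p y (b i)) :=
    (hp.fderiv_right (m := 1) (by norm_num)).clm_apply contDiff_const
  have hdc (i) : HasCompactSupport (fun y => fderiv ℝ p y (b i)) := hc.fderiv_apply (𝕜 := ℝ) _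
  have hdpU (i) : tsupport (fun y => fderiv ℝ p y (b i)) ⊆ U :=
    (tsupport_fderiv_apply_subset ℝ _).trans hpU
  simp only [laplacian_eq_sum_fderiv_fderiv b hp.contDiffAt, Finset.mul_sum,
    ← sum_fderiv_mul_fderiv b]
  rw [integral_finsetSum, integral_finsetSum, ← Finset.sum_neg_distrib]
  · refine Finset.sum_congr rfl fun i _ => ?_
    rw [integral_mul_fderiv_eq_neg hU hu (hdp i) (hdc i) (hdpU i), neg_neg]
  · exact fun i _ => integrable_mul_of_tsupport_subset hU hu.continuousOn
      (((hdp i).continuous_fderiv one_ne_zero).clm_apply continuous_const)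
      ((hdc i).fderiv_apply (𝕜 := ℝ) _) ((tsupport_fderiv_apply_subset ℝ _).trans (hdpU i))
  · exact fun i _ => integrable_mul_of_tsupport_subset hU
      ((hu.continuousOn_fderiv_of_isOpen hU le_rfl).clm_apply continuousOn_const)
      (hdp i).continuous (hdc i) (hdpU i)

lemma integral_mul_laplacian_eq (hU : IsOpen U) (hu : ContDiffOn ℝ 2 u U) (hp : ContDiff ℝ 2 p)
    (hc : HasCompactSupport p) (hpU : tsupport p ⊆ U) :
    ∫ y, u y * Δ p y = ∫ y, Δ u y * p y := by
  rw [← neg_inj,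
    ← integral_inner_gradient_eq_neg_mul_laplacian hU (hu.of_le one_le_two) hp hc hpU,
    integral_inner_gradient_eq_neg_laplacian_mul hU hu (hp.of_le one_le_two) hc hpU]

end Green

section TruncatedPower

lemma hasDerivAt_max_zero_pow (k : ℕ) (t : ℝ) :
    HasDerivAt (fun s : ℝ => max s 0 ^ (k + 2)) ((k + 2) * max t 0 ^ (k + 1)) t := by
  rcases lt_trichotomy t 0 with ht | rfl | ht
  · have h : (fun s : ℝ => max s 0 ^ (k + 2)) =ᶠ[𝓝 t] fun _ => 0 := by
      filter_upwards [Iio_mem_nhds ht] with s hs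
      simp [max_eq_right (mem_Iio.1 hs).le]
    simpa [max_eq_right ht.le] using (hasDerivAt_const t (0 : ℝ)).congr_of_eventuallyEq h
  · rw [hasDerivAt_iff_tendsto_slope]
    have hslope : (fun s : ℝ => max s 0 ^ (k + 1)) =ᶠ[𝓝[≠] 0]
        slope (fun s : ℝ => max s 0 ^ (k + 2)) 0 := by
      filter_upwards [self_mem_nhdsWithin] with s hs
      rcases lt_or_gt_of_ne hs with hs | hs
      · simp [slope, max_eq_right hs.le]
      · simp [slope, max_eq_left hs.le, pow_succ', hs.ne']
    refine Tendsto.congr' hslope (Tendsto.mono_left ?_ nhdsWithin_le_nhds)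
    exact Continuous.tendsto' (by fun_prop) _ _ (by simp)
  · have h : (fun s : ℝ => max s 0 ^ (k + 2)) =ᶠ[𝓝 t] fun s => s ^ (k + 2) := by
      filter_upwards [Ioi_mem_nhds ht] with s hs
      rw [max_eq_left (le_of_lt hs)]
    simpa [max_eq_left ht.le] using (hasDerivAt_pow (k + 2) t).congr_of_eventuallyEq h

lemma hasDerivAt_max_one_sub_mul_zero_pow (σ : ℝ) (k : ℕ) (t : ℝ) :
    HasDerivAt (fun s : ℝ => max (1 - σ * s) 0 ^ (k + 2))
      (-((k + 2) * σ) * max (1 - σ * t) 0 ^ (k + 1)) t := by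
  have hline : HasDerivAt (fun s : ℝ => 1 - σ * s) (-σ) t := by
    simpa using ((hasDerivAt_id t).const_mul σ).const_sub 1
  refine ((hasDerivAt_max_zero_pow k (1 - σ * t)).comp t hline).congr_deriv ?_
  ring

lemma contDiff_max_zero_pow (k : ℕ) : ContDiff ℝ k fun t : ℝ => max t 0 ^ (k + 1) := by
  induction k with
  | zero => exact contDiff_zero.2 (by fun_prop)
  | succ k ih =>
    push_cast
    refine contDiff_succ_iff_deriv.2
      ⟨fun t => (hasDerivAt_max_zero_pow k t).differentiableAt, by simp, ?_⟩
    rw [funext fun t => (hasDerivAt_max_zero_pow k t).deriv]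
    exact contDiff_const.mul ih

end TruncatedPower

section MeanValue

variable {E : Type*} [NormedAddCommGroup E]

/-- The radial weight `(1 - ‖y‖ ^ 2)₊ ^ 2` in the mean value inequality. Unlike the indicator of
the unit ball, it is `C¹` and `-y` times it is the gradient of a compactly supported function. -/
def radialWeight (y : E) : ℝ := max (1 - ‖y‖ ^ 2) 0 ^ 2

lemma continuous_radialWeight : Continuous (radialWeight : E → ℝ) := by
  unfold radialWeight
  fun_prop

lemma radialWeight_nonneg (y : E) : 0 ≤ radialWeight y := sq_nonneg _

lemma tsupport_max_zero_pow_subset {k : ℕ} (hk : k ≠ 0) :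
    tsupport (fun y : E => max (1 - ‖y‖ ^ 2) 0 ^ k) ⊆ closedBall 0 1 := by
  refine closure_minimal (Function.support_subset_iff'.2 fun y hy => ?_) isClosed_closedBall
  rw [mem_closedBall_zero_iff, not_le] at hy
  rw [max_eq_right (by nlinarith), zero_pow hk]

lemma radialWeight_eq_zero {y : E} (hy : 1 < ‖y‖) : radialWeight y = 0 :=
  image_eq_zero_of_notMem_tsupport fun h => by
    simpa [hy.not_ge] using tsupport_max_zero_pow_subset two_ne_zero h

lemma le_radialWeight {y : E} (hy : ‖y‖ ≤ 1 / 2) : 9 / 16 ≤ radialWeight y := by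
  have h : 3 / 4 ≤ max (1 - ‖y‖ ^ 2) 0 := le_max_of_le_left (by nlinarith [norm_nonneg y])
  calc (9 / 16 : ℝ) = (3 / 4) ^ 2 := by norm_num
    _ ≤ radialWeight y := by unfold radialWeight; gcongr

section NormedSpace

variable [NormedSpace ℝ E]

lemma closedBall_subset_preimage_add_smul {w : E} {b t : ℝ} (ht : t ∈ Ioo (-b) b) :
    closedBall 0 1 ⊆ (fun y => w + t • y) ⁻¹' ball w b := fun y hy => by
  rw [mem_closedBall_zero_iff] at hy
  rw [mem_preimage, mem_ball_iff_norm, add_sub_cancel_left, norm_smul, Real.norm_eq_abs]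
  have := abs_lt.2 ht
  nlinarith [abs_nonneg t]

lemma indicator_ball_le_radialWeight {v : E → ℝ} {w : E} {r : ℝ} (hr : 0 < r)
    (hv : ∀ y ∈ ball w (3 * r), 0 ≤ v y) (y : E) :
    (ball w r).indicator v (w + (2 * r) • y)
      ≤ 16 / 9 * (v (w + (2 * r) • y) * radialWeight y) := by
  have hball {s : ℝ} : w + (2 * r) • y ∈ ball w s ↔ 2 * r * ‖y‖ < s := by
    rw [mem_ball_iff_norm, add_sub_cancel_left, norm_smul, Real.norm_of_nonneg (by positivity)]
  by_cases hy : ‖y‖ ≤ 1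
  · have hvy : 0 ≤ v (w + (2 * r) • y) := hv _ (hball.2 (by nlinarith))
    refine indicator_apply_le' (fun hmem => ?_)
      fun _ => by have := radialWeight_nonneg y; positivity
    nlinarith [le_radialWeight (y := y) (by nlinarith [hball.1 hmem])]
  · rw [indicator_of_notMem fun hmem => by nlinarith [hball.1 hmem],
      radialWeight_eq_zero (not_le.1 hy), mul_zero, mul_zero]

end NormedSpace

variable [InnerProductSpace ℝ E]

lemma gradient_radialWeight_potential [CompleteSpace E] (y : E) :
    ∇ (fun z : E => max (1 - ‖z‖ ^ 2) 0 ^ 3) y = -(6 * radialWeight y) • y := by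
  have hg : HasDerivAt (fun s : ℝ => max (1 - s) 0 ^ 3) (-3 * max (1 - ‖y‖ ^ 2) 0 ^ 2)
      (‖y‖ ^ 2) := by
    convert hasDerivAt_max_one_sub_mul_zero_pow 1 1 (‖y‖ ^ 2) using 2 <;> norm_num
  have h := gradient_comp_real (u := fun z : E => ‖z‖ ^ 2) hg.differentiableAt
    ((contDiff_norm_sq ℝ).differentiable one_ne_zero y)
  rw [Function.comp_def, hg.deriv, gradient_norm_sq, smul_smul] at h
  rw [h, radialWeight]
  ring_nf

variable [FiniteDimensional ℝ E] [MeasurableSpace E] [BorelSpace E] {u : E → ℝ} {U : Set E}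

lemma integral_fderiv_self_mul_radialWeight_nonpos (hU : IsOpen U) (hU₁ : closedBall 0 1 ⊆ U)
    (hu : ContDiffOn ℝ 2 u U) (hsuper : ∀ y ∈ U, Δ u y ≤ 0) :
    ∫ y, fderiv ℝ u y y * radialWeight y ≤ 0 := by
  set P : E → ℝ := fun y => max (1 - ‖y‖ ^ 2) 0 ^ 3
  have hP : ContDiff ℝ 1 P :=
    ((contDiff_max_zero_pow 2).comp (contDiff_const.sub (contDiff_norm_sq ℝ))).of_le one_le_two
  have hPU : tsupport P ⊆ closedBall 0 1 := tsupport_max_zero_pow_subset three_ne_zero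
  have hinner (y) : ⟪∇ u y, ∇ P y⟫_ℝ = -6 * (fderiv ℝ u y y * radialWeight y) := by
    rw [gradient_radialWeight_potential, inner_smul_right, inner_gradient_left]
    ring
  have hgreen := integral_inner_gradient_eq_neg_laplacian_mul hU hu hP
    ((isCompact_closedBall 0 1).of_isClosed_subset (isClosed_tsupport _) hPU) (hPU.trans hU₁)
  have hnonpos : ∫ y, Δ u y * P y ≤ 0 := integral_nonpos fun y => by
    by_cases hy : y ∈ closedBall (0 : E) 1
    · exact mul_nonpos_of_nonpos_of_nonneg (hsuper y (hU₁ hy)) (by positivity)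
    · simp [image_eq_zero_of_notMem_tsupport fun h => hy (hPU h)]
  rw [funext hinner, integral_const_mul] at hgreen
  linarith

lemma hasDerivAt_integral_comp_add_smul_mul {w : E} {b t : ℝ} {φ : E → ℝ}
    (hu : ContDiffOn ℝ 1 u (ball w b)) (hφ : Continuous φ) (hφs : tsupport φ ⊆ closedBall 0 1)
    (ht : t ∈ Ioo (-b) b) :
    HasDerivAt (fun s => ∫ y, u (w + s • y) * φ y) (∫ y, fderiv ℝ u (w + t • y) y * φ y) t := by
  obtain ⟨c, hc, hcb⟩ := exists_between (abs_lt.2 ht)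
  have hφc : HasCompactSupport φ :=
    (isCompact_closedBall 0 1).of_isClosed_subset (isClosed_tsupport φ) hφs
  have hφ₀ {y : E} (hy : y ∉ closedBall 0 1) : φ y = 0 :=
    image_eq_zero_of_notMem_tsupport fun h => hy (hφs h)
  have hdu : ContinuousOn (fderiv ℝ u) (ball w b) :=
    hu.continuousOn_fderiv_of_isOpen isOpen_ball le_rfl
  obtain ⟨M, hM⟩ := (isCompact_closedBall w c).exists_bound_of_continuousOn
    (hdu.mono (closedBall_subset_ball hcb))
  have hint {a : E → ℝ} {s : ℝ} (hs : s ∈ Ioo (-b) b)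
      (ha : ContinuousOn a ((fun y => w + s • y) ⁻¹' ball w b)) :
      Integrable (fun y => a y * φ y) :=
    integrable_mul_of_tsupport_subset (isOpen_ball.preimage (by fun_prop)) ha hφ hφc
      (hφs.trans (closedBall_subset_preimage_add_smul hs))
  have hcb' : Ioo (-c) c ⊆ Ioo (-b) b := Ioo_subset_Ioo (neg_le_neg hcb.le) hcb.le
  refine (hasDerivAt_integral_of_dominated_loc_of_deriv_le (s := Ioo (-c) c)
    (F' := fun s y => fderiv ℝ u (w + s • y) y * φ y) (bound := fun y => M * ‖φ y‖)
    (Ioo_mem_nhds (abs_lt.1 hc).1 (abs_lt.1 hc).2) ?_ ?_ ?_ ?_ ?_ ?_).2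
  · filter_upwards [Ioo_mem_nhds (abs_lt.1 hc).1 (abs_lt.1 hc).2] with s hs
    exact (hint (hcb' hs) (hu.continuousOn.comp (by fun_prop) fun _ => id)).aestronglyMeasurable
  · exact hint ht (hu.continuousOn.comp (by fun_prop) fun _ => id)
  · exact (hint ht ((hdu.comp (f := fun y => w + t • y) (by fun_prop) fun _ => id).clm_apply
      continuousOn_id)).aestronglyMeasurable
  · refine .of_forall fun y s hs => ?_
    by_cases hy : y ∈ closedBall 0 1
    · have hbound := hM _ (ball_subset_closedBall (closedBall_subset_preimage_add_smul hs hy))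
      rw [mem_closedBall_zero_iff] at hy
      rw [norm_mul]
      gcongr
      exact (ContinuousLinearMap.le_of_opNorm_le_of_le _ hbound hy).trans_eq (mul_one M)
    · simp [hφ₀ hy]
  · exact (hφ.norm.integrable_of_hasCompactSupport hφc.norm).const_mul M
  · refine .of_forall fun y s hs => ?_
    by_cases hy : y ∈ closedBall 0 1
    · have hmem := closedBall_subset_preimage_add_smul (w := w) (hcb' hs) hy
      exact (hasDerivAt_comp_add_smul <| (hu.differentiableOn one_ne_zero).differentiableAt
        (isOpen_ball.mem_nhds hmem)).mul_const _
    · simpa [hφ₀ hy] using hasDerivAt_const s (0 : ℝ)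

lemma antitoneOn_integral_comp_add_smul_mul_radialWeight {w : E} {b : ℝ}
    (hu : ContDiffOn ℝ 2 u (ball w b)) (hsuper : ∀ y ∈ ball w b, Δ u y ≤ 0) :
    AntitoneOn (fun t : ℝ => ∫ y, u (w + t • y) * radialWeight y) (Ico 0 b) := by
  have hIco {t : ℝ} (ht : t ∈ Ico 0 b) : t ∈ Ioo (-b) b := ⟨by linarith [ht.1, ht.2], ht.2⟩
  have hderiv {t : ℝ} (ht : t ∈ Ico 0 b) := hasDerivAt_integral_comp_add_smul_mul
    (hu.of_le one_le_two) continuous_radialWeight (tsupport_max_zero_pow_subset two_ne_zero)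
    (hIco ht)
  refine antitoneOn_of_deriv_nonpos (convex_Ico 0 b)
    (fun t ht => (hderiv ht).continuousAt.continuousWithinAt)
    (fun t ht => (hderiv (interior_subset ht)).differentiableAt.differentiableWithinAt)
    fun t ht => ?_
  rw [(hderiv (interior_subset ht)).deriv]
  have hscaled : t * ∫ y, fderiv ℝ u (w + t • y) y * radialWeight y ≤ 0 := by
    have hnonpos : ∫ y, fderiv ℝ (fun z => u (w + t • z)) y y * radialWeight y ≤ 0 :=
      integral_fderiv_self_mul_radialWeight_nonpos (isOpen_ball.preimage (by fun_prop))
        (closedBall_subset_preimage_add_smul (hIco (interior_subset ht)))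
        (hu.comp (by fun_prop) fun _ => id) fun y hy => by
          rw [laplacian_comp_add_smul]
          exact mul_nonpos_of_nonneg_of_nonpos (sq_nonneg t) (hsuper _ hy)
    simpa only [fderiv_comp_add_smul, _root_.smul_apply, smul_eq_mul, mul_assoc,
      integral_const_mul] using hnonpos
  rw [interior_Ico] at ht
  exact nonpos_of_mul_nonpos_right hscaled ht.1

lemma integral_eq_pow_mul_integral_comp_add_smul (g : E → ℝ) (w : E) {c : ℝ} (hc : 0 < c) :
    ∫ y, g y = c ^ finrank ℝ E * ∫ y, g (w + c • y) := by
  rw [Measure.integral_comp_smul volume (fun z => g (w + z)), integral_add_left_eq_self g,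
    abs_of_pos (by positivity), smul_eq_mul, mul_inv_cancel_left₀ (by positivity)]

lemma exists_setIntegral_ball_le {r : ℝ} (hr : 0 < r) :
    ∃ C : ℝ, ∀ (v : E → ℝ) (w : E), NonnegSuperharmonicOn v (ball w (3 * r)) →
      ∫ y in ball w r, v y ≤ C * v w := by
  refine ⟨(2 * r) ^ finrank ℝ E * (16 / 9 * ∫ y : E, radialWeight y), fun v w hv => ?_⟩
  have h2r : 2 * r ∈ Ico 0 (3 * r) := ⟨by positivity, by linarith⟩
  have hmean : ∫ y, v (w + (2 * r) • y) * radialWeight y ≤ v w * ∫ y : E, radialWeight y := by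
    have h := antitoneOn_integral_comp_add_smul_mul_radialWeight hv.contDiffOn
      hv.laplacian_nonpos ⟨le_rfl, by positivity⟩ h2r h2r.1
    simpa [integral_const_mul] using h
  have hsub : closedBall 0 1 ⊆ (fun y => w + (2 * r) • y) ⁻¹' ball w (3 * r) :=
    closedBall_subset_preimage_add_smul ⟨by linarith, h2r.2⟩
  have hweight := tsupport_max_zero_pow_subset (E := E) two_ne_zero
  have hint : Integrable fun y => v (w + (2 * r) • y) * radialWeight y :=
    integrable_mul_of_tsupport_subset (isOpen_ball.preimage (by fun_prop))
      (hv.contDiffOn.continuousOn.comp (by fun_prop) fun _ => id) continuous_radialWeight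
      ((isCompact_closedBall 0 1).of_isClosed_subset (isClosed_tsupport _) hweight)
      (hweight.trans hsub)
  have hnonneg : 0 ≤ᵐ[volume] fun y => (ball w r).indicator v (w + (2 * r) • y) :=
    .of_forall fun y => indicator_nonneg
      (fun z hz => hv.nonneg z (ball_subset_ball (by linarith) hz)) _
  have hle (y : E) : (ball w r).indicator v (w + (2 * r) • y)
      ≤ 16 / 9 * (v (w + (2 * r) • y) * radialWeight y) :=
    indicator_ball_le_radialWeight hr hv.nonneg y
  calc ∫ y in ball w r, v y
      = (2 * r) ^ finrank ℝ E * ∫ y, (ball w r).indicator v (w + (2 * r) • y) := by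
        rw [← integral_indicator measurableSet_ball,
          integral_eq_pow_mul_integral_comp_add_smul (c := 2 * r) _ w (by positivity)]
    _ ≤ (2 * r) ^ finrank ℝ E * ∫ y, 16 / 9 * (v (w + (2 * r) • y) * radialWeight y) := by
        exact mul_le_mul_of_nonneg_left
          (integral_mono_of_nonneg hnonneg (hint.const_mul _) (.of_forall hle)) (by positivity)
    _ ≤ (2 * r) ^ finrank ℝ E * (16 / 9 * (v w * ∫ y : E, radialWeight y)) := by
        rw [integral_const_mul]
        gcongr
    _ = _ := by ring

end MeanValue

section WeakHarnack

/-- The functions in the family `F` satisfy a weak Harnack inequality from `A` to `B`: uniformly in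
`u ∈ F`, the integral of `u` over `B` is controlled by each value of `u` on `A`. -/
def WeakHarnack {X : Type*} [MeasurableSpace X] (μ : Measure X) (F : Set (X → ℝ≥0∞))
    (A B : Set X) : Prop :=
  ∃ C ≠ ∞, ∀ u ∈ F, ∀ x ∈ A, ∫⁻ y in B, u y ∂μ ≤ C * u x

namespace WeakHarnack

variable {X : Type*} [MeasurableSpace X] {μ : Measure X} {F : Set (X → ℝ≥0∞)}
  {A A' B B' D S : Set X}

lemma mono (h : WeakHarnack μ F A B) (hA : A' ⊆ A) (hB : B' ⊆ B) : WeakHarnack μ F A' B' := by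
  obtain ⟨C, hC, hle⟩ := h
  exact ⟨C, hC, fun u hu x hx => (lintegral_mono_set hB).trans (hle u hu x (hA hx))⟩

lemma union_left (h : WeakHarnack μ F A B) (h' : WeakHarnack μ F A' B) :
    WeakHarnack μ F (A ∪ A') B := by
  obtain ⟨C, hC, hle⟩ := h
  obtain ⟨C', hC', hle'⟩ := h'
  refine ⟨max C C', max_ne_top hC hC', fun u hu x hx => hx.elim (fun hx => ?_) fun hx => ?_⟩
  · exact (hle u hu x hx).trans (by gcongr; exact le_max_left _ _)
  · exact (hle' u hu x hx).trans (by gcongr; exact le_max_right _ _)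

lemma union_right (h : WeakHarnack μ F A B) (h' : WeakHarnack μ F A B') :
    WeakHarnack μ F A (B ∪ B') := by
  obtain ⟨C, hC, hle⟩ := h
  obtain ⟨C', hC', hle'⟩ := h'
  refine ⟨C + C', ENNReal.add_ne_top.2 ⟨hC, hC'⟩, fun u hu x hx => ?_⟩
  rw [add_mul]
  exact (lintegral_union_le u B B').trans (add_le_add (hle u hu x hx) (hle' u hu x hx))

lemma trans_of_measure_ne_zero (h : WeakHarnack μ F A B) (h' : WeakHarnack μ F B' D)
    (hSm : MeasurableSet S) (hS : S ⊆ B ∩ B') (h₀ : μ S ≠ 0) (h_top : μ S ≠ ∞) :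
    WeakHarnack μ F A D := by
  obtain ⟨C, hC, hle⟩ := h
  obtain ⟨C', hC', hle'⟩ := h'
  refine ⟨C' * C / μ S, ENNReal.div_ne_top (ENNReal.mul_ne_top hC' hC) h₀, fun u hu x hx => ?_⟩
  rw [← ENNReal.mul_div_right_comm, ENNReal.le_div_iff_mul_le (.inl h₀) (.inl h_top)]
  calc (∫⁻ y in D, u y ∂μ) * μ S = ∫⁻ _ in S, ∫⁻ y in D, u y ∂μ ∂μ := (setLIntegral_const ..).symm
    _ ≤ ∫⁻ z in S, C' * u z ∂μ := setLIntegral_mono' hSm fun z hz => hle' u hu z (hS hz).2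
    _ = C' * ∫⁻ z in S, u z ∂μ := lintegral_const_mul' _ _ hC'
    _ ≤ C' * ∫⁻ z in B, u z ∂μ := by gcongr; exact fun z hz => (hS hz).1
    _ ≤ C' * (C * u x) := by gcongr; exact hle u hu x hx
    _ = C' * C * u x := (mul_assoc ..).symm

variable [TopologicalSpace X] [OpensMeasurableSpace X] [IsLocallyFiniteMeasure μ]
  [μ.IsOpenPosMeasure]

lemma trans {z : X} (h : WeakHarnack μ F A B) (h' : WeakHarnack μ F B' D) (hB : B ∈ 𝓝 z)
    (hB' : B' ∈ 𝓝 z) : WeakHarnack μ F A D := by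
  obtain ⟨V, hV, hVtop⟩ := μ.exists_isOpen_measure_lt_top z
  set S := V ∩ interior (B ∩ B')
  have hzS : z ∈ S := ⟨hV, mem_interior_iff_mem_nhds.2 (inter_mem hB hB')⟩
  have hS : IsOpen S := hVtop.1.inter isOpen_interior
  exact h.trans_of_measure_ne_zero h' hS.measurableSet (inter_subset_right.trans interior_subset)
    (hS.measure_ne_zero μ ⟨z, hzS⟩) (measure_ne_top_of_subset inter_subset_left hVtop.2.ne)

lemma of_isPreconnected_of_isCompact {U K : Set X} (hU : IsPreconnected U)
    (hloc : ∀ x ∈ U, ∃ N ∈ 𝓝 x, WeakHarnack μ F N N) (hK : IsCompact K) (hKU : K ⊆ U) :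
    WeakHarnack μ F K K := by
  have hchain (x) (hx : x ∈ U) (y) (hy : y ∈ U) :
      ∃ A ∈ 𝓝 x, ∃ B ∈ 𝓝 y, WeakHarnack μ F A B := by
    refine hU.induction₂' (fun x y => ∃ A ∈ 𝓝 x, ∃ B ∈ 𝓝 y, WeakHarnack μ F A B)
      (fun x hx => ?_) (fun x y z _ _ _ => ?_) hx hy
    · obtain ⟨N, hN, hNN⟩ := hloc x hx
      filter_upwards [nhdsWithin_le_nhds (eventually_mem_nhds_iff.2 hN)] with y hy
      exact ⟨⟨N, hN, N, hy, hNN⟩, N, hy, N, hN, hNN⟩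
    · rintro ⟨A, hA, B, hB, hAB⟩ ⟨B', hB', D, hD, hBD⟩
      exact ⟨A, hA, D, hD, hAB.trans hBD hB hB'⟩
  have hright (x) (hx : x ∈ K) : ∃ A ∈ 𝓝 x, WeakHarnack μ F A K := by
    refine hK.induction_on (p := fun B => ∃ A ∈ 𝓝 x, WeakHarnack μ F A B) ?_ ?_ ?_ fun y hy => ?_
    · exact ⟨univ, univ_mem, 0, by simp, by simp⟩
    · exact fun B B' hBB' ⟨A, hA, hAB⟩ => ⟨A, hA, hAB.mono subset_rfl hBB'⟩
    · rintro B B' ⟨A, hA, hAB⟩ ⟨A', hA', hAB'⟩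
      exact ⟨A ∩ A', inter_mem hA hA', (hAB.mono inter_subset_left subset_rfl).union_right
        (hAB'.mono inter_subset_right subset_rfl)⟩
    · obtain ⟨A, hA, B, hB, hAB⟩ := hchain x (hKU hx) y (hKU hy)
      exact ⟨B, mem_nhdsWithin_of_mem_nhds hB, A, hA, hAB⟩
  refine hK.induction_on (p := fun A => WeakHarnack μ F A K) ⟨0, by simp, by simp⟩ ?_ ?_ ?_
  · exact fun A A' hAA' h => h.mono hAA' subset_rfl
  · exact fun A A' => union_left
  · intro x hx
    obtain ⟨A, hA, hAK⟩ := hright x hx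
    exact ⟨A, mem_nhdsWithin_of_mem_nhds hA, hAK⟩

end WeakHarnack

section Superharmonic

variable {E : Type*} [NormedAddCommGroup E] [InnerProductSpace ℝ E] [FiniteDimensional ℝ E]
  [MeasurableSpace E] [BorelSpace E] {U K : Set E}

lemma exists_mem_nhds_weakHarnack (hU : IsOpen U) {z : E} (hz : z ∈ U) :
    ∃ N ∈ 𝓝 z, WeakHarnack volume {u | ∃ v, NonnegSuperharmonicOn v U ∧ u = ENNReal.ofReal ∘ v}
      N N := by
  obtain ⟨d, hd, hdU⟩ := Metric.isOpen_iff.1 hU z hz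
  have hd' : 0 < d / 7 := by positivity
  obtain ⟨C, hC⟩ := exists_setIntegral_ball_le (E := E) (mul_pos two_pos hd')
  refine ⟨ball z (d / 7), ball_mem_nhds z hd', ENNReal.ofReal C, ENNReal.ofReal_ne_top, ?_⟩
  rintro _ ⟨v, hv, rfl⟩ w hw
  have hnear : ball z (d / 7) ⊆ ball w (2 * (d / 7)) :=
    ball_subset_ball' (by linarith [mem_ball'.1 hw])
  have hfar : ball w (3 * (2 * (d / 7))) ⊆ U :=
    (ball_subset_ball' (by linarith [mem_ball.1 hw])).trans hdU
  have hclosed : closedBall w (2 * (d / 7)) ⊆ U :=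
    (closedBall_subset_ball (by linarith)).trans hfar
  have hint : IntegrableOn v (ball w (2 * (d / 7))) :=
    ((hv.contDiffOn.continuousOn.mono hclosed).integrableOn_compact
      (isCompact_closedBall _ _)).mono_set ball_subset_closedBall
  have hnonneg : 0 ≤ᵐ[volume.restrict (ball w (2 * (d / 7)))] v :=
    ae_restrict_of_forall_mem measurableSet_ball fun y hy =>
      hv.nonneg y (hclosed (ball_subset_closedBall hy))
  calc ∫⁻ y in ball z (d / 7), ENNReal.ofReal (v y)
      ≤ ∫⁻ y in ball w (2 * (d / 7)), ENNReal.ofReal (v y) := lintegral_mono_set hnear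
    _ = ENNReal.ofReal (∫ y in ball w (2 * (d / 7)), v y) :=
        (ofReal_integral_eq_lintegral_ofReal hint hnonneg).symm
    _ ≤ ENNReal.ofReal (C * v w) := ENNReal.ofReal_le_ofReal (hC v w (hv.mono hfar))
    _ = ENNReal.ofReal C * ENNReal.ofReal (v w) :=
        ENNReal.ofReal_mul' (hv.nonneg w (hfar (mem_ball_self (by positivity))))

lemma exists_setIntegral_le_of_isCompact (hU : IsOpen U) (hUc : IsPreconnected U)
    (hK : IsCompact K) (hKU : K ⊆ U) :
    ∃ C : ℝ, ∀ v : E → ℝ, NonnegSuperharmonicOn v U →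
      ∀ x ∈ K, ∫ y in K, v y ≤ C * v x := by
  obtain ⟨C, hC, hle⟩ := WeakHarnack.of_isPreconnected_of_isCompact (μ := volume) hUc
    (fun z hz => exists_mem_nhds_weakHarnack hU hz) hK hKU
  refine ⟨C.toReal, fun v hv x hx => ?_⟩
  have hvx : 0 ≤ v x := hv.nonneg x (hKU hx)
  have hint : IntegrableOn v K := (hv.contDiffOn.continuousOn.mono hKU).integrableOn_compact hK
  have hnonneg : 0 ≤ᵐ[volume.restrict K] v :=
    ae_restrict_of_forall_mem hK.measurableSet fun y hy => hv.nonneg y (hKU hy)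
  rw [← ENNReal.ofReal_le_ofReal_iff (by positivity),
    ofReal_integral_eq_lintegral_ofReal hint hnonneg, ENNReal.ofReal_mul ENNReal.toReal_nonneg,
    ENNReal.ofReal_toReal hC]
  exact hle _ ⟨v, hv, rfl⟩ x hx

end Superharmonic

end WeakHarnack

section NormPreimage

variable {E : Type*} [NormedAddCommGroup E]

lemma ball_sdiff_closedBall_zero (r R : ℝ) :
    ball (0 : E) R \ closedBall 0 r = norm ⁻¹' Ioo r R := by
  ext y
  rw [Set.mem_sdiff, mem_ball_zero_iff, mem_closedBall_zero_iff, not_le, and_comm, mem_preimage,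
    mem_Ioo]

lemma isCompact_norm_preimage_Icc [ProperSpace E] (a b : ℝ) :
    IsCompact ((norm : E → ℝ) ⁻¹' Icc a b) :=
  (isCompact_closedBall 0 b).of_isClosed_subset (isClosed_Icc.preimage continuous_norm)
    fun _ hx => mem_closedBall_zero_iff.2 hx.2

variable [NormedSpace ℝ E]

lemma norm_preimage_eq_image_smul_sphere {I : Set ℝ} (hI : I ⊆ Ioi 0) :
    (norm : E → ℝ) ⁻¹' I = (fun p : ℝ × E => p.1 • p.2) '' (I ×ˢ sphere 0 1) := by
  ext x
  constructor
  · intro hx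
    have hx₀ : ‖x‖ ≠ 0 := (hI hx).ne'
    refine ⟨(‖x‖, ‖x‖⁻¹ • x), ⟨hx, ?_⟩, smul_inv_smul₀ hx₀ x⟩
    rw [mem_sphere_zero_iff_norm, norm_smul, norm_inv, norm_norm, inv_mul_cancel₀ hx₀]
  · rintro ⟨⟨t, y⟩, ⟨ht, hy⟩, rfl⟩
    rw [mem_sphere_zero_iff_norm] at hy
    rw [mem_preimage, norm_smul, hy, mul_one, Real.norm_of_nonneg (le_of_lt (hI ht))]
    exact ht

lemma isPreconnected_norm_preimage (hdim : 1 < Module.rank ℝ E) {I : Set ℝ}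
    (hI : IsPreconnected I) (hI₀ : I ⊆ Ioi 0) : IsPreconnected ((norm : E → ℝ) ⁻¹' I) := by
  rw [norm_preimage_eq_image_smul_sphere hI₀]
  exact (hI.prod (isPreconnected_sphere hdim 0 1)).image _ (by fun_prop)

end NormPreimage

section RadialProfile

lemma continuous_deriv_deriv_uncurry {f : ℝ → ℝ → ℝ} (hf : ContDiff ℝ 2 (Function.uncurry f)) :
    Continuous fun p : ℝ × ℝ => deriv (deriv (f p.1)) p.2 := by
  have h₁ : ContDiff ℝ 1 fun p : ℝ × ℝ => fderiv ℝ (f p.1) p.2 1 :=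
    ContDiff.fderiv_apply (f := fun p : ℝ × ℝ => f p.1) (n := 1) (m := 2)
      (hf.comp ((contDiff_fst.fst).prodMk contDiff_snd)) contDiff_snd contDiff_const (by norm_num)
  have h₂ : ContDiff ℝ 0 fun p : ℝ × ℝ => fderiv ℝ (fun t => fderiv ℝ (f p.1) t 1) p.2 1 :=
    ContDiff.fderiv_apply (f := fun (p : ℝ × ℝ) t => fderiv ℝ (f p.1) t 1) (n := 0) (m := 1)
      (h₁.comp ((contDiff_fst.fst).prodMk contDiff_snd)) contDiff_snd contDiff_const (by norm_num)
  exact h₂.continuous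

/-- The profile of the radial test functions, as a function of the fundamental solution. It
vanishes on `(-∞, s₀]` and on `[σ⁻¹, ∞)`, and it is convex on `[s₁, ∞)`. -/
noncomputable def radialProfile (s₀ s₁ σ t : ℝ) : ℝ :=
  max (1 - σ * t) 0 ^ 3 * Real.smoothTransition ((t - s₀) / (s₁ - s₀))

variable {s₀ s₁ σ t : ℝ}

lemma contDiff_uncurry_radialProfile :
    ContDiff ℝ 2 (Function.uncurry (radialProfile s₀ s₁)) := by
  have hcube : ContDiff ℝ 2 fun p : ℝ × ℝ => max (1 - p.1 * p.2) 0 ^ 3 :=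
    (contDiff_max_zero_pow 2).comp (contDiff_const.sub (contDiff_fst.mul contDiff_snd))
  exact hcube.mul <| Real.smoothTransition.contDiff.comp <|
    (contDiff_snd.sub contDiff_const).div_const _

lemma radialProfile_nonneg : 0 ≤ radialProfile s₀ s₁ σ t :=
  mul_nonneg (by positivity) (Real.smoothTransition.nonneg _)

lemma radialProfile_eq_zero_of_le (hs : s₀ < s₁) (ht : t ≤ s₀) : radialProfile s₀ s₁ σ t = 0 := by
  rw [radialProfile, Real.smoothTransition.zero_of_nonpos, mul_zero]
  exact div_nonpos_of_nonpos_of_nonneg (by linarith) (by linarith)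

lemma radialProfile_eq_zero_of_one_le (ht : 1 ≤ σ * t) : radialProfile s₀ s₁ σ t = 0 := by
  rw [radialProfile, max_eq_right (by linarith), zero_pow three_ne_zero, zero_mul]

lemma radialProfile_eq_of_le (hs : s₀ < s₁) (ht : s₁ ≤ t) :
    radialProfile s₀ s₁ σ t = max (1 - σ * t) 0 ^ 3 := by
  rw [radialProfile, Real.smoothTransition.one_of_one_le, mul_one]
  rw [one_le_div (by linarith)]
  linarith

lemma le_radialProfile (hs : s₀ < s₁) (ht : s₁ ≤ t) (hσ : σ * t ≤ 3 / 4) :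
    1 / 64 ≤ radialProfile s₀ s₁ σ t := by
  have h : 1 / 4 ≤ max (1 - σ * t) 0 := le_max_of_le_left (by linarith)
  calc (1 / 64 : ℝ) = (1 / 4) ^ 3 := by norm_num
    _ ≤ radialProfile s₀ s₁ σ t := by rw [radialProfile_eq_of_le hs ht]; gcongr

lemma deriv_deriv_radialProfile_nonneg (hs : s₀ < s₁) (ht : s₁ < t) :
    0 ≤ deriv (deriv (radialProfile s₀ s₁ σ)) t := by
  have heq : radialProfile s₀ s₁ σ =ᶠ[𝓝 t] fun s => max (1 - σ * s) 0 ^ 3 := by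
    filter_upwards [Ioi_mem_nhds ht] with s hs' using radialProfile_eq_of_le hs (le_of_lt hs')
  have h₁ (s : ℝ) : HasDerivAt (fun s => max (1 - σ * s) 0 ^ 3)
      (-(3 * σ) * max (1 - σ * s) 0 ^ 2) s := by
    convert hasDerivAt_max_one_sub_mul_zero_pow σ 1 s using 2
    norm_num
  have h₂ : HasDerivAt (fun s => max (1 - σ * s) 0 ^ 2) (-(2 * σ) * max (1 - σ * t) 0) t := by
    simpa using hasDerivAt_max_one_sub_mul_zero_pow σ 0 t
  rw [heq.deriv.deriv_eq, funext fun s => (h₁ s).deriv, (h₂.const_mul _).deriv]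
  calc (0 : ℝ) ≤ 6 * σ ^ 2 * max (1 - σ * t) 0 := by positivity
    _ = _ := by ring

end RadialProfile

section NewtonKernel

variable {E : Type*} [NormedAddCommGroup E] [InnerProductSpace ℝ E] {y : E} {a b d : ℝ}

/-- The fundamental solution of the Laplacian up to a constant factor. At the origin it takes the
junk value `0` when the dimension is not `2`. -/
noncomputable def newtonKernel (y : E) : ℝ := ‖y‖ ^ (2 - finrank ℝ E : ℝ)

lemma contDiffAt_newtonKernel (hy : y ≠ 0) : ContDiffAt ℝ 2 (newtonKernel : E → ℝ) y :=
  (contDiffAt_norm ℝ hy).rpow_const_of_ne (norm_ne_zero_iff.2 hy)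

lemma laplacian_newtonKernel [FiniteDimensional ℝ E] (hy : y ≠ 0) :
    Δ (newtonKernel : E → ℝ) y = 0 := by
  set c : ℝ := (2 - finrank ℝ E) / 2 with hc
  have hcomp : (newtonKernel : E → ℝ) = (fun s : ℝ => s ^ c) ∘ fun y : E => ‖y‖ ^ 2 := by
    ext z
    rw [newtonKernel, Function.comp_apply, ← Real.rpow_natCast, ← Real.rpow_mul (norm_nonneg z),
      Nat.cast_ofNat, hc, mul_div_cancel₀ _ two_ne_zero]
  have hs : ‖y‖ ^ 2 ≠ 0 := pow_ne_zero 2 (norm_ne_zero_iff.2 hy)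
  have hdim : (finrank ℝ E : ℝ) = 2 - 2 * c := by rw [hc]; ring
  have hpow : (‖y‖ ^ 2) ^ (c - 1) = (‖y‖ ^ 2) ^ (c - 1 - 1) * ‖y‖ ^ 2 := by
    rw [Real.rpow_sub_one hs (c - 1), div_mul_cancel₀ _ hs]
  rw [hcomp, laplacian_comp_real (u := fun y : E => ‖y‖ ^ 2) (Real.contDiffAt_rpow_const_of_ne hs)
    (contDiff_norm_sq ℝ).contDiffAt, gradient_norm_sq, laplacian_norm_sq, hdim, norm_smul,
    Real.deriv_rpow_const', deriv_const_mul_field, Real.deriv_rpow_const]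
  simp only [hpow, Real.norm_ofNat]
  ring

lemma rpow_mul_newtonKernel (hd : 0 ≤ d) (y : E) :
    d ^ (finrank ℝ E - 2 : ℝ) * newtonKernel y = (d / ‖y‖) ^ (finrank ℝ E - 2 : ℝ) := by
  rw [newtonKernel, ← neg_sub (finrank ℝ E : ℝ), Real.rpow_neg (norm_nonneg y), ← div_eq_mul_inv,
    Real.div_rpow hd (norm_nonneg y)]

/-- A radial test function, compactly supported in `d ≤ ‖y‖ ≤ b` and subharmonic in the ball of
radius `a`. -/
noncomputable def annulusTest (a b d : ℝ) (y : E) : ℝ :=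
  radialProfile (b ^ (2 - finrank ℝ E : ℝ)) (a ^ (2 - finrank ℝ E : ℝ))
    (d ^ (finrank ℝ E - 2 : ℝ)) (newtonKernel y)

lemma annulusTest_nonneg : 0 ≤ annulusTest a b d y := radialProfile_nonneg

lemma rpow_two_sub_finrank_lt (hn : 3 ≤ finrank ℝ E) (ha : 0 < a) (hab : a < b) :
    b ^ (2 - finrank ℝ E : ℝ) < a ^ (2 - finrank ℝ E : ℝ) := by
  have hn' : (3 : ℝ) ≤ finrank ℝ E := by exact_mod_cast hn
  exact Real.rpow_lt_rpow_of_neg ha hab (by linarith)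

lemma annulusTest_eq_zero (hn : 3 ≤ finrank ℝ E) (ha : 0 < a) (hab : a < b) (hd : 0 < d)
    (hy : y ∉ norm ⁻¹' Icc d b) : annulusTest a b d y = 0 := by
  have hn' : (3 : ℝ) ≤ finrank ℝ E := by exact_mod_cast hn
  have hlt := rpow_two_sub_finrank_lt hn ha hab
  rcases eq_or_ne y 0 with rfl | hy₀
  · refine radialProfile_eq_zero_of_le hlt ?_
    rw [newtonKernel, norm_zero, Real.zero_rpow (by linarith)]
    exact Real.rpow_nonneg (ha.trans hab).le _
  have hy₀' : 0 < ‖y‖ := norm_pos_iff.2 hy₀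
  rcases lt_or_ge ‖y‖ d with hyd | hyd
  · refine radialProfile_eq_zero_of_one_le ?_
    rw [rpow_mul_newtonKernel hd.le]
    exact Real.one_le_rpow ((one_le_div hy₀').2 hyd.le) (by linarith)
  · refine radialProfile_eq_zero_of_le hlt ?_
    have hby : b < ‖y‖ := not_le.1 fun h => hy ⟨hyd, h⟩
    exact (Real.rpow_lt_rpow_of_neg (ha.trans hab) hby (by linarith)).le

lemma tsupport_annulusTest_subset (hn : 3 ≤ finrank ℝ E) (ha : 0 < a) (hab : a < b)
    (hd : 0 < d) :
    tsupport (annulusTest a b d : E → ℝ) ⊆ norm ⁻¹' Icc d b :=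
  closure_minimal (Function.support_subset_iff'.2 fun _ => annulusTest_eq_zero hn ha hab hd)
    (isClosed_Icc.preimage continuous_norm)

lemma contDiff_annulusTest (hn : 3 ≤ finrank ℝ E) (ha : 0 < a) (hab : a < b) (hd : 0 < d) :
    ContDiff ℝ 2 (annulusTest a b d : E → ℝ) := by
  refine contDiff_iff_contDiffAt.2 fun y => ?_
  by_cases hy : y ∈ tsupport (annulusTest a b d : E → ℝ)
  · have hy₀ : y ≠ 0 :=
      norm_pos_iff.1 (hd.trans_le (tsupport_annulusTest_subset hn ha hab hd hy).1)
    exact (contDiff_uncurry_radialProfile.comp₂ contDiff_const contDiff_id).contDiffAt.comp y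
      (contDiffAt_newtonKernel hy₀)
  · exact contDiffAt_const.congr_of_eventuallyEq (notMem_tsupport_iff_eventuallyEq.1 hy)

lemma le_annulusTest (hn : 3 ≤ finrank ℝ E) (ha : 0 < a) (hab : a < b) (hd : 0 < d)
    (hdy : 4 / 3 * d ≤ ‖y‖) (hya : ‖y‖ ≤ a) :
    1 / 64 ≤ annulusTest a b d y := by
  have hn' : (3 : ℝ) ≤ finrank ℝ E := by exact_mod_cast hn
  have hy₀ : 0 < ‖y‖ := by linarith
  refine le_radialProfile (rpow_two_sub_finrank_lt hn ha hab)
    (Real.rpow_le_rpow_of_nonpos hy₀ hya (by linarith)) ?_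
  rw [rpow_mul_newtonKernel hd.le]
  have hratio : d / ‖y‖ ≤ 3 / 4 := by rw [div_le_iff₀ hy₀]; linarith
  calc (d / ‖y‖) ^ (finrank ℝ E - 2 : ℝ) ≤ (3 / 4) ^ (finrank ℝ E - 2 : ℝ) := by gcongr; linarith
    _ ≤ (3 / 4) ^ (1 : ℝ) :=
      Real.rpow_le_rpow_of_exponent_ge (by norm_num) (by norm_num) (by linarith)
    _ = 3 / 4 := Real.rpow_one _

lemma laplacian_annulusTest [FiniteDimensional ℝ E] (a b d : ℝ) (hy : y ≠ 0) :
    Δ (annulusTest a b d : E → ℝ) y =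
      deriv (deriv (radialProfile (b ^ (2 - finrank ℝ E : ℝ)) (a ^ (2 - finrank ℝ E : ℝ))
        (d ^ (finrank ℝ E - 2 : ℝ)))) (newtonKernel y) * ‖∇ (newtonKernel : E → ℝ) y‖ ^ 2 := by
  have hprofile (s₀ s₁ σ : ℝ) : ContDiff ℝ 2 (radialProfile s₀ s₁ σ) :=
    contDiff_uncurry_radialProfile.comp₂ contDiff_const contDiff_id
  have h := laplacian_comp_real (hprofile (b ^ (2 - finrank ℝ E : ℝ)) (a ^ (2 - finrank ℝ E : ℝ))
    (d ^ (finrank ℝ E - 2 : ℝ))).contDiffAt (contDiffAt_newtonKernel hy)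
  rwa [laplacian_newtonKernel hy, mul_zero, add_zero] at h

variable [FiniteDimensional ℝ E]

lemma laplacian_annulusTest_nonneg (hn : 3 ≤ finrank ℝ E) (ha : 0 < a) (hab : a < b)
    (hd : 0 < d) (hya : ‖y‖ < a) :
    0 ≤ Δ (annulusTest a b d : E → ℝ) y := by
  rcases eq_or_ne y 0 with rfl | hy₀
  · refine (laplacian_eq_zero_of_notMem_tsupport fun h => ?_).ge
    exact hd.not_ge (norm_zero (E := E) ▸ (tsupport_annulusTest_subset hn ha hab hd h).1)
  have hn' : (3 : ℝ) ≤ finrank ℝ E := by exact_mod_cast hn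
  rw [laplacian_annulusTest a b d hy₀]
  refine mul_nonneg (deriv_deriv_radialProfile_nonneg (rpow_two_sub_finrank_lt hn ha hab) ?_)
    (sq_nonneg _)
  exact Real.rpow_lt_rpow_of_neg (norm_pos_iff.2 hy₀) hya (by linarith)

lemma exists_neg_le_laplacian_annulusTest (hn : 3 ≤ finrank ℝ E) (ha : 0 < a) :
    ∃ M : ℝ, ∀ d ∈ Ioc 0 a, ∀ y ∈ norm ⁻¹' Icc a b, -M ≤ Δ (annulusTest a b d : E → ℝ) y := by
  have hn' : (3 : ℝ) ≤ finrank ℝ E := by exact_mod_cast hn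
  have hring {y : E} (hy : y ∈ norm ⁻¹' Icc a b) : y ≠ 0 := norm_pos_iff.1 (ha.trans_le hy.1)
  have hkernel : ContDiffOn ℝ 2 (newtonKernel : E → ℝ) {0}ᶜ := fun y hy =>
    (contDiffAt_newtonKernel hy).contDiffWithinAt
  have hgrad : ContinuousOn (∇ (newtonKernel : E → ℝ)) {0}ᶜ :=
    (toDual ℝ E).symm.continuous.comp_continuousOn
      (hkernel.continuousOn_fderiv_of_isOpen isOpen_compl_singleton one_le_two)
  -- `d` only enters through the exponentiated parameter `p.1`, which stays in a compact interval.
  have hcont : ContinuousOn (fun p : ℝ × E =>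
      deriv (deriv (radialProfile (b ^ (2 - finrank ℝ E : ℝ)) (a ^ (2 - finrank ℝ E : ℝ)) p.1))
        (newtonKernel p.2) * ‖∇ (newtonKernel : E → ℝ) p.2‖ ^ 2)
      (Icc 0 (a ^ (finrank ℝ E - 2 : ℝ)) ×ˢ (norm ⁻¹' Icc a b)) := by
    have hsnd : MapsTo Prod.snd (Icc 0 (a ^ (finrank ℝ E - 2 : ℝ)) ×ˢ (norm ⁻¹' Icc a b))
        ({0}ᶜ : Set E) := fun p hp => hring hp.2
    have hparam := continuousOn_fst.prodMk (hkernel.continuousOn.comp continuousOn_snd hsnd)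
    exact ((continuous_deriv_deriv_uncurry contDiff_uncurry_radialProfile).comp_continuousOn
      hparam).mul ((hgrad.comp continuousOn_snd hsnd).norm.pow 2)
  obtain ⟨M, hM⟩ :=
    (isCompact_Icc.prod (isCompact_norm_preimage_Icc a b)).exists_bound_of_continuousOn hcont
  refine ⟨M, fun d hd y hy => ?_⟩
  rw [laplacian_annulusTest a b d (hring hy)]
  refine (abs_le.1 (hM (d ^ (finrank ℝ E - 2 : ℝ), y) ⟨⟨?_, ?_⟩, hy⟩)).1
  · exact Real.rpow_nonneg hd.1.le _
  · exact Real.rpow_le_rpow hd.1.le hd.2 (by linarith)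

end NewtonKernel

section UnitAnnulus

lemma mul_setIntegral_le_integral {X : Type*} [MeasurableSpace X] {μ : Measure X} {g h : X → ℝ}
    {S : Set X} {M : ℝ} (hS : MeasurableSet S) (hg : IntegrableOn g S μ) (hh : Integrable h μ)
    (hgh : ∀ y ∈ S, M * g y ≤ h y) (hnonneg : ∀ y ∉ S, 0 ≤ h y) :
    M * ∫ y in S, g y ∂μ ≤ ∫ y, h y ∂μ := by
  rw [← integral_const_mul, ← integral_indicator hS]
  exact integral_mono (IntegrableOn.integrable_indicator (hg.const_mul M) hS) hh fun y =>
    indicator_apply_le' (hgh y) (hnonneg y)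

variable {E : Type*} [NormedAddCommGroup E] [InnerProductSpace ℝ E] [FiniteDimensional ℝ E]
  [MeasurableSpace E] [BorelSpace E]

lemma mul_setIntegral_neg_laplacian_le {v p : E → ℝ} {U S T : Set E} {ε M : ℝ} (hU : IsOpen U)
    (hv : NonnegSuperharmonicOn v U) (hp : ContDiff ℝ 2 p) (hpc : HasCompactSupport p)
    (hpU : tsupport p ⊆ U) (hp₀ : ∀ y, 0 ≤ p y) (hS : IsCompact S) (hSU : S ⊆ U)
    (hpS : ∀ y ∈ S, ε ≤ p y) (hT : IsCompact T) (hTU : T ⊆ U) (hpT : ∀ y ∈ T, -M ≤ Δ p y)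
    (hpT' : ∀ y ∉ T, 0 ≤ Δ p y) :
    ε * ∫ y in S, -Δ v y ≤ M * ∫ y in T, v y := by
  have hΔsupp : tsupport (Δ p) ⊆ tsupport p :=
    closure_minimal (Function.support_subset_iff'.2 fun _ => laplacian_eq_zero_of_notMem_tsupport)
      (isClosed_tsupport p)
  have hvΔ : ContinuousOn (Δ v) U := continuousOn_laplacian hU hv.contDiffOn
  have hv₀ := hv.contDiffOn.continuousOn
  have hsource : ε * ∫ y in S, -Δ v y ≤ ∫ y, -Δ v y * p y := by
    refine mul_setIntegral_le_integral hS.measurableSet ((hvΔ.neg.mono hSU).integrableOn_compact hS)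
      (integrable_mul_of_tsupport_subset hU hvΔ.neg hp.continuous hpc hpU) (fun y hy => ?_)
      fun y _ => ?_
    · nlinarith [hpS y hy, hv.laplacian_nonpos y (hSU hy)]
    · by_cases hy : y ∈ U
      · exact mul_nonneg (neg_nonneg.2 (hv.laplacian_nonpos y hy)) (hp₀ y)
      · rw [image_eq_zero_of_notMem_tsupport fun h => hy (hpU h), mul_zero]
  have htest : -M * ∫ y in T, v y ≤ ∫ y, v y * Δ p y := by
    refine mul_setIntegral_le_integral hT.measurableSet ((hv₀.mono hTU).integrableOn_compact hT)
      (integrable_mul_of_tsupport_subset hU hv₀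
        (continuousOn_univ.1 (continuousOn_laplacian isOpen_univ hp.contDiffOn))
        (hpc.of_isClosed_subset (isClosed_tsupport _) hΔsupp) (hΔsupp.trans hpU))
      (fun y hy => ?_) fun y hyT => ?_
    · nlinarith [hpT y hy, hv.nonneg y (hTU hy)]
    · by_cases hy : y ∈ U
      · exact mul_nonneg (hv.nonneg y hy) (hpT' y hyT)
      · rw [image_eq_zero_of_notMem_tsupport fun h => hy (hpU (hΔsupp h)), mul_zero]
  rw [integral_mul_laplacian_eq hU hv.contDiffOn hp hpc hpU] at htest
  simp only [neg_mul, integral_neg] at hsource htest ⊢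
  linarith

lemma exists_setIntegral_neg_laplacian_le_setIntegral {a b : ℝ} (hn : 3 ≤ finrank ℝ E)
    (ha : 0 < a) (hab : a < b) :
    ∃ C : ℝ, ∀ d ∈ Ioc 0 a, ∀ (U : Set E) (v : E → ℝ), IsOpen U → norm ⁻¹' Icc d b ⊆ U →
      NonnegSuperharmonicOn v U →
        ∫ y in norm ⁻¹' Icc (4 / 3 * d) a, -Δ v y ≤ C * ∫ y in norm ⁻¹' Icc a b, v y := by
  obtain ⟨M, hM⟩ := exists_neg_le_laplacian_annulusTest (E := E) (b := b) hn ha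
  refine ⟨64 * M, fun d hd U v hU hdU hv => ?_⟩
  have hps := tsupport_annulusTest_subset (E := E) hn ha hab hd.1
  have hle := mul_setIntegral_neg_laplacian_le hU hv (contDiff_annulusTest hn ha hab hd.1)
    ((isCompact_norm_preimage_Icc d b).of_isClosed_subset (isClosed_tsupport _) hps)
    (hps.trans hdU) (fun y => annulusTest_nonneg) (isCompact_norm_preimage_Icc (4 / 3 * d) a)
    (fun y hy => hdU ⟨by linarith [hy.1, hd.1], hy.2.trans hab.le⟩)
    (fun y hy => le_annulusTest hn ha hab hd.1 hy.1 hy.2) (isCompact_norm_preimage_Icc a b)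
    (fun y hy => hdU ⟨hd.2.trans hy.1, hy.2⟩) (hM d hd) fun y hy => ?_
  · linarith
  · rcases lt_or_ge ‖y‖ a with hya | hya
    · exact laplacian_annulusTest_nonneg hn ha hab hd.1 hya
    · exact (laplacian_eq_zero_of_notMem_tsupport fun h => hy ⟨hya, (hps h).2⟩).ge

lemma exists_setIntegral_neg_laplacian_le {ρ₀ ρ₂ : ℝ} (hn : 3 ≤ finrank ℝ E) (h₀ : 0 < ρ₀)
    (h₀₂ : ρ₀ < ρ₂) (h₂ : ρ₂ < 1) :
    ∃ C : ℝ, ∀ r : ℝ, 0 < r → 2 * r < ρ₀ → ∀ v : E → ℝ,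
      NonnegSuperharmonicOn v (norm ⁻¹' Ioo r 1) → ∀ x ∈ norm ⁻¹' Icc ρ₀ ρ₂,
        ∫ y in norm ⁻¹' Icc (2 * r) ρ₀, -Δ v y ≤ C * v x := by
  obtain ⟨C, hC⟩ := exists_setIntegral_neg_laplacian_le_setIntegral hn h₀ h₀₂
  have hdim : 1 < Module.rank ℝ E := by
    rw [← finrank_eq_rank]
    exact_mod_cast (by lia : 1 < finrank ℝ E)
  set K : Set E := norm ⁻¹' Icc ρ₀ ρ₂
  have hKU : K ⊆ norm ⁻¹' Ioo (ρ₀ / 2) 1 := preimage_mono (Icc_subset_Ioo (half_lt_self h₀) h₂)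
  obtain ⟨C', hC'⟩ := exists_setIntegral_le_of_isCompact (isOpen_Ioo.preimage continuous_norm)
    (isPreconnected_norm_preimage hdim isPreconnected_Ioo fun t ht => (half_pos h₀).trans ht.1)
    (isCompact_norm_preimage_Icc ρ₀ ρ₂) hKU
  refine ⟨max C 0 * C', fun r hr hrρ v hv x hx => ?_⟩
  have hv' : NonnegSuperharmonicOn v (norm ⁻¹' Ioo (ρ₀ / 2) 1) :=
    hv.mono (preimage_mono (Ioo_subset_Ioo_left (by linarith)))
  have hintv : 0 ≤ ∫ y in K, v y :=
    setIntegral_nonneg (isCompact_norm_preimage_Icc ρ₀ ρ₂).measurableSet fun y hy =>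
      hv'.nonneg y (hKU hy)
  calc ∫ y in norm ⁻¹' Icc (2 * r) ρ₀, -Δ v y
      = ∫ y in norm ⁻¹' Icc (4 / 3 * (3 / 2 * r)) ρ₀, -Δ v y := by ring_nf
    _ ≤ C * ∫ y in K, v y :=
        hC (3 / 2 * r) ⟨by positivity, by linarith⟩ _ v (isOpen_Ioo.preimage continuous_norm)
          (preimage_mono (Icc_subset_Ioo (by linarith) h₂)) hv
    _ ≤ max C 0 * ∫ y in K, v y := by gcongr; exact le_max_left _ _
    _ ≤ max C 0 * (C' * v x) := by gcongr; exact hC' v hv' x hx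
    _ = max C 0 * C' * v x := (mul_assoc ..).symm

end UnitAnnulus

section Scaling

variable {E : Type*} [NormedAddCommGroup E] [InnerProductSpace ℝ E] [FiniteDimensional ℝ E]
  [MeasurableSpace E] [BorelSpace E]

lemma setIntegral_norm_preimage_Icc_mul (g : E → ℝ) {R : ℝ} (hR : 0 < R) (a b : ℝ) :
    ∫ y in norm ⁻¹' Icc (a * R) (b * R), g y
      = R ^ finrank ℝ E * ∫ y in norm ⁻¹' Icc a b, g (R • y) := by
  have hsmul : R • (norm ⁻¹' Icc a b : Set E) = norm ⁻¹' Icc (a * R) (b * R) := by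
    ext y
    rw [mem_smul_set_iff_inv_smul_mem₀ hR.ne', mem_preimage, norm_smul, norm_inv,
      Real.norm_of_nonneg hR.le, mem_preimage, mem_Icc, mem_Icc, ← div_eq_inv_mul, le_div_iff₀ hR,
      div_le_iff₀ hR]
  rw [Measure.setIntegral_comp_smul_of_pos volume g _ hR, hsmul, smul_eq_mul,
    mul_inv_cancel_left₀ (by positivity)]

lemma exists_setIntegral_neg_laplacian_le_mul_pow {ρ₀ ρ₂ : ℝ} (hn : 3 ≤ finrank ℝ E)
    (h₀₂ : ρ₀ < ρ₂) (h₂ : ρ₂ < 1) :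
    ∃ C : ℝ, ∀ r R : ℝ, 0 < r → 0 < R → 2 * r / R < ρ₀ → ∀ v : E → ℝ,
      NonnegSuperharmonicOn v (norm ⁻¹' Ioo r R) → ∀ x ∈ norm ⁻¹' Icc (ρ₀ * R) (ρ₂ * R),
        ∫ y in norm ⁻¹' Icc (2 * r) (ρ₀ * R), -Δ v y ≤ C * R ^ (finrank ℝ E - 2) * v x := by
  rcases le_or_gt ρ₀ 0 with h₀ | h₀
  · exact ⟨0, fun r R hr hR hρ => absurd (by positivity) (hρ.trans_le h₀).not_gt⟩
  obtain ⟨C, hC⟩ := exists_setIntegral_neg_laplacian_le (E := E) hn h₀ h₀₂ h₂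
  refine ⟨C, fun r R hr hR hρ v hv x hx => ?_⟩
  have hpre : (fun y : E => 0 + R • y) ⁻¹' (norm ⁻¹' Ioo r R) = norm ⁻¹' Ioo (r / R) 1 := by
    ext y
    simp only [mem_preimage, mem_Ioo, zero_add, norm_smul, Real.norm_of_nonneg hR.le,
      div_lt_iff₀' hR, mul_lt_iff_lt_one_right hR]
  have hx' : R⁻¹ • x ∈ norm ⁻¹' Icc ρ₀ ρ₂ := by
    rwa [mem_preimage, norm_smul, norm_inv, Real.norm_of_nonneg hR.le, ← div_eq_inv_mul, mem_Icc,
      le_div_iff₀ hR, div_le_iff₀ hR]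
  have hunit := hC (r / R) (by positivity) (by rwa [← mul_div_assoc]) (fun y => v (0 + R • y))
    (hpre ▸ hv.comp_add_smul 0 R) (R⁻¹ • x) hx'
  simp only [laplacian_comp_add_smul] at hunit
  simp only [zero_add, smul_inv_smul₀ hR.ne'] at hunit
  have hpow : R ^ finrank ℝ E = R ^ (finrank ℝ E - 2) * R ^ 2 := by
    rw [← pow_add, Nat.sub_add_cancel (by lia)]
  calc ∫ y in norm ⁻¹' Icc (2 * r) (ρ₀ * R), -Δ v y
      = ∫ y in norm ⁻¹' Icc (2 * (r / R) * R) (ρ₀ * R), -Δ v y := by field_simp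
    _ = R ^ (finrank ℝ E - 2) * ∫ y in norm ⁻¹' Icc (2 * (r / R)) ρ₀, -(R ^ 2 * Δ v (R • y)) := by
      rw [setIntegral_norm_preimage_Icc_mul _ hR, hpow, mul_assoc, ← integral_const_mul]
      simp only [mul_neg]
    _ ≤ R ^ (finrank ℝ E - 2) * (C * v x) := by gcongr
    _ = C * R ^ (finrank ℝ E - 2) * v x := by ring

theorem scaled_annulus_min_principle_general (hn : 3 ≤ finrank ℝ E) {ρ₀ ρ₂ : ℝ} (h₀₂ : ρ₀ < ρ₂)
    (h₂ : ρ₂ < 1) :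
    ∃ C : ℝ, 1 < C ∧ ∀ r R : ℝ, 0 < r → 0 < R → 2 * r / R < ρ₀ → ∀ v f : E → ℝ,
      ContDiffOn ℝ 2 v (ball 0 R \ closedBall 0 r) →
      ContinuousOn v (closure (ball 0 R \ closedBall 0 r)) →
      (∀ x ∈ ball 0 R \ closedBall 0 r, -Δ v x = f x) →
      (∀ x ∈ ball 0 R \ closedBall 0 r, 0 ≤ f x) →
      (∀ x ∈ frontier (ball 0 R \ closedBall 0 r), 0 ≤ v x) →
      ∀ x : E, ρ₀ * R ≤ ‖x‖ → ‖x‖ ≤ ρ₂ * R →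
        1 / (C * R ^ (finrank ℝ E - 2)) * ∫ y in {y : E | 2 * r ≤ ‖y‖ ∧ ‖y‖ ≤ ρ₀ * R}, f y
          ≤ v x := by
  have : Nontrivial E := nontrivial_of_finrank_pos (R := ℝ) (by lia)
  obtain ⟨C, hC⟩ := exists_setIntegral_neg_laplacian_le_mul_pow (E := E) hn h₀₂ h₂
  refine ⟨max C 2, lt_max_of_lt_right one_lt_two,
    fun r R hr hR hρ v f hv hvc hf hf₀ hfr x hx₀ hx₂ => ?_⟩
  have hrR : 2 * r < ρ₀ * R := (div_lt_iff₀ hR).1 hρ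
  set U : Set E := ball 0 R \ closedBall 0 r
  have hU : U = norm ⁻¹' Ioo r R := ball_sdiff_closedBall_zero r R
  have hsuper (y) (hy : y ∈ U) : Δ v y ≤ 0 := by linarith [hf y hy, hf₀ y hy]
  have hnonneg (y) (hy : y ∈ U) : 0 ≤ v y :=
    nonneg_of_laplacian_nonpos (isOpen_ball.sdiff isClosed_closedBall)
      (isBounded_ball.subset sdiff_subset) hv hvc hsuper hfr hy
  have hvU : NonnegSuperharmonicOn v (norm ⁻¹' Ioo r R) := hU ▸ ⟨hv, hsuper, hnonneg⟩
  have hvx : 0 ≤ v x := hvU.nonneg x ⟨by linarith, by nlinarith⟩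
  have hint : ∫ y in {y : E | 2 * r ≤ ‖y‖ ∧ ‖y‖ ≤ ρ₀ * R}, f y
      = ∫ y in norm ⁻¹' Icc (2 * r) (ρ₀ * R), -Δ v y :=
    setIntegral_congr_fun (isClosed_Icc.preimage continuous_norm).measurableSet fun y hy =>
      (hf y (hU ▸ ⟨by linarith [hy.1], by nlinarith [hy.2]⟩)).symm
  have hC₀ : 0 < max C 2 * R ^ (finrank ℝ E - 2) := by positivity
  rw [hint, one_div_mul_eq_div, div_le_iff₀' hC₀]
  calc ∫ y in norm ⁻¹' Icc (2 * r) (ρ₀ * R), -Δ v y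
      ≤ C * R ^ (finrank ℝ E - 2) * v x := hC r R hr hR hρ v hvU x ⟨hx₀, hx₂⟩
    _ ≤ max C 2 * R ^ (finrank ℝ E - 2) * v x := by gcongr; exact le_max_left _ _

end Scaling
end

/-- scaled quantitative minimum principle on the annulus `B_R \ B_r`. -/
theorem scaled_annulus_min_principle (n : ℕ) (hn : 3 ≤ n) (ρ₀ ρ₁ ρ₂ : ℝ)
    (h01 : ρ₀ < ρ₁) (h12 : ρ₁ < ρ₂) (h21 : ρ₂ < 1) :
    ∃ C : ℝ, 1 < C ∧
      ∀ r R : ℝ, 0 < r → r < R / 2 → 2 * r / R < ρ₀ →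
        ∀ v f : EuclideanSpace ℝ (Fin n) → ℝ,
          ContDiffOn ℝ 2 v (closure (ball (0 : EuclideanSpace ℝ (Fin n)) R \ closedBall 0 r)) →
          ContinuousOn f (closure (ball (0 : EuclideanSpace ℝ (Fin n)) R \ closedBall 0 r)) →
          (∀ x ∈ (ball (0 : EuclideanSpace ℝ (Fin n)) R \ closedBall 0 r), - lap v x = f x) →
          (∀ x ∈ (ball (0 : EuclideanSpace ℝ (Fin n)) R \ closedBall 0 r), 0 ≤ f x) →
          (∀ x ∈ frontier (ball (0 : EuclideanSpace ℝ (Fin n)) R \ closedBall 0 r), 0 ≤ v x) →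
          ∀ x : EuclideanSpace ℝ (Fin n), ρ₁ * R ≤ ‖x‖ → ‖x‖ ≤ ρ₂ * R →
            (1 / (C * R ^ (n - 2))) *
                ∫ y in {y : EuclideanSpace ℝ (Fin n) | 2 * r ≤ ‖y‖ ∧ ‖y‖ ≤ ρ₀ * R}, f y
              ≤ v x := by
  obtain ⟨C, hC₁, hC⟩ := scaled_annulus_min_principle_general (E := EuclideanSpace ℝ (Fin n))
    (by rwa [finrank_euclideanSpace_fin]) (h01.trans h12) h21
  rw [finrank_euclideanSpace_fin] at hC
  refine ⟨C, hC₁, fun r R hr hrR hρ v f hv _ hf hf₀ hfr x hx₁ hx₂ => ?_⟩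
  have hR : 0 < R := by linarith
  refine hC r R hr hR hρ v f (hv.mono subset_closure) hv.continuousOn (fun y hy => ?_) hf₀ hfr x
    ((mul_le_mul_of_nonneg_right h01.le hR.le).trans hx₁) hx₂
  have hvy : ContDiffAt ℝ 2 v y := (hv.mono subset_closure).contDiffAt
    ((isOpen_ball.sdiff isClosed_closedBall).mem_nhds hy)
  rw [← lap_eq_laplacian hvy, hf y hy]
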